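/- arXiv:1006.0920 — 2 statements merged into one kernel-verified Lean document; each statement's English description precedes it below -/
import Mathlib

section
/- Let G be a group containing an element of infinite order and such that H₂(G;ℤ) is a finitely generated abelian group. Then the quotient B₃(G)/∂₄(B₄(G)) is not a finitely generated abelian group. -/
open FreeAbelianGroup

/-- Degree-2 bar differential: `∂₂(g₁|g₂) = (g₂) − (g₁g₂) + (g₁)`. -/
def barD2 (G : Type*) [Group G] : FreeAbelianGroup (G × G) →+ FreeAbelianGroup G :=
  FreeAbelianGroup.lift fun p => of p.2 - of (p.1 * p.2) + of p.1

/-- Degree-3 bar differential. -/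
def barD3 (G : Type*) [Group G] : FreeAbelianGroup (G × G × G) →+ FreeAbelianGroup (G × G) :=
  FreeAbelianGroup.lift fun p =>
    of (p.2.1, p.2.2) - of (p.1 * p.2.1, p.2.2) + of (p.1, p.2.1 * p.2.2) - of (p.1, p.2.1)

/-- Degree-4 bar differential. -/
def barD4 (G : Type*) [Group G] :
    FreeAbelianGroup (G × G × G × G) →+ FreeAbelianGroup (G × G × G) :=
  FreeAbelianGroup.lift fun p =>
    of (p.2.1, p.2.2.1, p.2.2.2) - of (p.1 * p.2.1, p.2.2.1, p.2.2.2)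
      + of (p.1, p.2.1 * p.2.2.1, p.2.2.2) - of (p.1, p.2.1, p.2.2.1 * p.2.2.2)
      + of (p.1, p.2.1, p.2.2.1)

/-- `H₂(G;ℤ)`: 2-cycles of the bar complex modulo the boundaries `∂₃(B₃(G))`. -/
def barH2 (G : Type*) [Group G] :=
  (barD2 G).ker ⧸ ((barD3 G).range.addSubgroupOf (barD2 G).ker)

instance (G : Type*) [Group G] : AddCommGroup (barH2 G) :=
  QuotientAddGroup.Quotient.addCommGroup _

theorem barD2_barD3 (G : Type*) [Group G] (a : FreeAbelianGroup (G × G × G)) :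
    barD2 G (barD3 G a) = 0 := by
  have h : (barD2 G).comp (barD3 G) = 0 := by
    ext ⟨p, q, r⟩
    simp [barD2, barD3, mul_assoc]
    abel
  exact DFunLike.congr_fun h a

theorem barD3_barD4 (G : Type*) [Group G] (a : FreeAbelianGroup (G × G × G × G)) :
    barD3 G (barD4 G a) = 0 := by
  have h : (barD3 G).comp (barD4 G) = 0 := by
    ext ⟨p, q, r, s⟩
    simp [barD3, barD4, mul_assoc]
    abel
  exact DFunLike.congr_fun h a

theorem fg_of_exact {A B C : Type*} [AddCommGroup A] [AddCommGroup B] [AddCommGroup C]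
    (f : A →+ B) (g : B →+ C) (hA : AddGroup.FG A) (hC : AddGroup.FG C)
    (hg : Function.Surjective g) (h : ∀ b, g b = 0 → ∃ a, f a = b) (h' : ∀ a, g (f a) = 0) :
    AddGroup.FG B := by
  rw [← Module.Finite.iff_addGroup_fg] at *
  refine ⟨Submodule.fg_of_fg_map_of_fg_inf_ker g.toIntLinearMap ?_ ?_⟩
  · have : Submodule.map g.toIntLinearMap ⊤ = ⊤ := by
      rw [Submodule.map_top]
      exact LinearMap.range_eq_top.2 hg
    rw [this]
    exact hC.1
  · have : (⊤ : Submodule ℤ B) ⊓ LinearMap.ker g.toIntLinearMap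
        = Submodule.map f.toIntLinearMap ⊤ := by
      ext b
      simp only [top_inf_eq, LinearMap.mem_ker, Submodule.map_top, LinearMap.mem_range]
      constructor
      · exact h b
      · rintro ⟨a, rfl⟩
        exact h' a
    rw [this]
    exact hA.1.map _

theorem finite_of_ker_fg (G : Type*) [Group G] (h : AddGroup.FG (barD2 G).ker) : Finite G := by
  classical
  rw [AddGroup.fg_iff_addSubgroup_fg] at h
  obtain ⟨S, hS⟩ := h
  let T : Finset (G × G) := S.biUnion fun a => a.support
  have key : ∀ p, p ∉ T → ∀ a ∈ (barD2 G).ker, coeff p a = 0 := by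
    intro p hp a ha
    rw [← hS] at ha
    have hle : AddSubgroup.closure (S : Set (FreeAbelianGroup (G × G))) ≤ (coeff p).ker := by
      rw [AddSubgroup.closure_le]
      intro b hb
      by_contra hne
      exact hp (Finset.mem_biUnion.2 ⟨b, hb, (mem_support_iff p b).2 hne⟩)
    exact hle ha
  have hfin : (Set.univ : Set G).Finite := by
    refine ((T.image Prod.snd ∪ {1}).finite_toSet).subset ?_
    intro g _
    by_contra hg
    simp only [Finset.coe_union, Finset.coe_singleton, Set.mem_union, Finset.mem_coe,
      Set.mem_singleton_iff, not_or] at hg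
    have h1 : ((1 : G), g) ∉ T := fun hT => hg.1 (Finset.mem_image_of_mem Prod.snd hT)
    have h2 := key _ h1 (of (1, g) - of (1, 1)) (by simp [AddMonoidHom.mem_ker, barD2])
    have hg1 : (1 : G) ≠ g := fun e => hg.2 e.symm
    simp [coeff, hg1] at h2
  exact Set.finite_univ_iff.1 hfin

/-- if `G` contains an element of infinite order and `H₂(G;ℤ)` is finitely
generated, then `B₃(G)/∂₄(B₄(G))` is not a finitely generated abelian group. -/
theorem stmt9 (G : Type*) [Group G] (x : G) (hx : ¬ IsOfFinOrder x)
    (hfg : AddGroup.FG (barH2 G)) :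
    ¬ AddGroup.FG (FreeAbelianGroup (G × G × G) ⧸ (barD4 G).range) := by
  intro hB
  have hf : Finite G := by
    apply finite_of_ker_fg
    refine fg_of_exact
      (QuotientAddGroup.lift (barD4 G).range
        ((barD3 G).codRestrict (barD2 G).ker (fun a => barD2_barD3 G a)) ?_)
      (QuotientAddGroup.mk' ((barD3 G).range.addSubgroupOf (barD2 G).ker)) hB hfg
      (QuotientAddGroup.mk'_surjective _) ?_ ?_
    · rintro _ ⟨a, rfl⟩
      exact Subtype.ext (barD3_barD4 G a)
    · intro b hb
      obtain ⟨a, ha⟩ := (QuotientAddGroup.eq_zero_iff b).1 hb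
      exact ⟨QuotientAddGroup.mk a, Subtype.ext ha⟩
    · intro a
      induction a using QuotientAddGroup.induction_on with
      | H a => exact (QuotientAddGroup.eq_zero_iff _).2 ⟨a, rfl⟩
  exact hx (isOfFinOrder_of_finite x)
end

section
/- Let A be an abelian group. For n ≥ 1 define SW_n : B_n(A) → ⋀ⁿ_ℚ(ℚ ⊗_ℤ A) on basis elements by SW_n(a₁|⋯|a_n) = (1/n!)·(1⊗a₁) ∧ ⋯ ∧ (1⊗a_n) (and let SW₀ : B₀(A) → ℚ send the empty tuple to 1). Then SW_{n−1} ∘ ∂_n = 0 for every n ≥ 1. In particular, each SW_n vanishes on the boundaries ∂_{n+1}(B_{n+1}(A)) and therefore induces a homomorphism H_n(A;ℤ) → ⋀ⁿ_ℚ(ℚ ⊗_ℤ A); equivalently, SW is a chain map from the bar complex of A to the Koszul complex of the abelian ℚ-Lie algebra ℚ ⊗_ℤ A, whose differential vanishes. -/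
open scoped TensorProduct

/-- The degree-`n` bar chains of an (additive) group `A`: the free abelian group on
`n`-tuples of elements of `A`. -/
abbrev barChains (A : Type*) (n : ℕ) := FreeAbelianGroup (Fin n → A)

/-- The bar differential `∂_{n+1} : B_{n+1}(A) → B_n(A)` for an additive abelian group
`A` (group law written additively):
`∂(a₀|…|a_n) = (a₁|…|a_n) + Σ_{i} (−1)^{i+1} (a₀|…|a_i + a_{i+1}|…|a_n)
  + (−1)^{n+1} (a₀|…|a_{n−1})`. -/
def barDiff (A : Type*) [AddCommGroup A] (n : ℕ) :
    barChains A (n + 1) →+ barChains A n :=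
  FreeAbelianGroup.lift fun g =>
    FreeAbelianGroup.of (fun j : Fin n => g j.succ)
      + (∑ i : Fin n, ((-1 : ℤ) ^ ((i : ℕ) + 1)) •
          FreeAbelianGroup.of (fun j : Fin n =>
            if (j : ℕ) < (i : ℕ) then g j.castSucc
            else if j = i then g i.castSucc + g i.succ
            else g j.succ))
      + ((-1 : ℤ) ^ (n + 1)) • FreeAbelianGroup.of (fun j : Fin n => g j.castSucc)

/-- The Suslin–Wodzicki map in the abelian case:
`SW_n(a₁|…|a_n) = (1/n!)·(1⊗a₁) ∧ ⋯ ∧ (1⊗a_n)`, with values in the exterior algebra of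
the `ℚ`-vector space `ℚ ⊗_ℤ A` (wedges of `n` vectors span the `n`-th exterior power). -/
noncomputable def SW (A : Type*) [AddCommGroup A] (n : ℕ) :
    barChains A n →+ ExteriorAlgebra ℚ (ℚ ⊗[ℤ] A) :=
  FreeAbelianGroup.lift fun g =>
    ((n.factorial : ℚ)⁻¹) •
      (List.ofFn fun i : Fin n =>
        ExteriorAlgebra.ι ℚ ((1 : ℚ) ⊗ₜ[ℤ] g i)).prod

/-- The multilinear map underlying `SW`. -/
theorem SW_of_eq (A : Type*) [AddCommGroup A] (n : ℕ) (g : Fin n → A) :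
    SW A n (FreeAbelianGroup.of g) = ((n.factorial : ℚ)⁻¹) •
      ExteriorAlgebra.ιMulti ℚ n (fun i => (1 : ℚ) ⊗ₜ[ℤ] g i) := by
  simp [SW, ExteriorAlgebra.ιMulti_apply]

theorem SW_merge (A : Type*) [AddCommGroup A] (n : ℕ) (g : Fin (n + 1) → A) (i : Fin n) :
    SW A n (FreeAbelianGroup.of (fun j : Fin n =>
            if (j : ℕ) < (i : ℕ) then g j.castSucc
            else if j = i then g i.castSucc + g i.succ
            else g j.succ)) =
      SW A n (FreeAbelianGroup.of (fun j => g (i.succ.succAbove j))) +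
      SW A n (FreeAbelianGroup.of (fun j => g (i.castSucc.succAbove j))) := by
  simp only [SW_of_eq]
  rw [← smul_add]
  congr 1
  have key := (ExteriorAlgebra.ιMulti ℚ n).map_update_add
    (fun j : Fin n => (1 : ℚ) ⊗ₜ[ℤ] g (i.castSucc.succAbove j)) i
    ((1 : ℚ) ⊗ₜ[ℤ] g i.castSucc) ((1 : ℚ) ⊗ₜ[ℤ] g i.succ)
  convert key using 2
  · congr 1
    funext j
    rcases lt_trichotomy j i with h | h | h
    · have h' : (j : ℕ) < i := h
      simp [Function.update_of_ne h.ne, h', Fin.succAbove_of_castSucc_lt, h]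
    · subst h
      simp [TensorProduct.tmul_add]
    · have h' : ¬ (j : ℕ) < i := not_lt.mpr (le_of_lt h)
      simp [Function.update_of_ne h.ne', h', h.ne', Fin.succAbove_of_le_castSucc, h.le]
  · congr 1
    funext j
    rcases lt_trichotomy j i with h | h | h
    · rw [Function.update_of_ne h.ne, Fin.succAbove_of_castSucc_lt i.castSucc _ (by simp [h]),
        Fin.succAbove_of_castSucc_lt i.succ _ (Fin.castSucc_lt_succ_iff.mpr h.le)]
    · subst h
      simp
    · rw [Function.update_of_ne h.ne', Fin.succAbove_of_le_castSucc i.castSucc _ (by simp [h.le]),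
        Fin.succAbove_of_le_castSucc i.succ _ (Fin.succ_le_castSucc_iff.mpr h)]
  · congr 1
    symm
    rw [Function.update_eq_self_iff]
    simp

theorem SW_telescope {M : Type*} [AddCommGroup M] (n : ℕ) (P : Fin (n + 1) → M) :
    P 0 + (∑ i : Fin n, ((-1 : ℤ) ^ ((i : ℕ) + 1)) • (P i.succ + P i.castSucc))
      + ((-1 : ℤ) ^ (n + 1)) • P (Fin.last n) = 0 := by
  induction n with
  | zero => simp
  | succ n ih =>
    have := ih (fun i => P i.castSucc)
    rw [Fin.sum_univ_castSucc]
    simp only [Fin.val_castSucc, Fin.succ_castSucc, Fin.castSucc_zero, Fin.val_last,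
      Fin.succ_last, smul_add, pow_succ] at this ⊢
    rw [← this]
    simp
    abel

theorem SW_barDiff (A : Type*) [AddCommGroup A] (n : ℕ) (x : barChains A (n + 1)) :
    SW A n (barDiff A n x) = 0 := by
  have h : (SW A n).comp (barDiff A n) = 0 := by
    ext g
    have := SW_telescope n
      (fun k => SW A n (FreeAbelianGroup.of (fun j => g (k.succAbove j))))
    simp only [AddMonoidHom.comp_apply, AddMonoidHom.zero_apply, barDiff,
      FreeAbelianGroup.lift_apply_of, map_add, map_sum, map_zsmul, SW_merge]
    simpa using this
  exact DFunLike.congr_fun h x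

/-- `SW₀` sends the empty tuple to `1`, and `SW_{n−1} ∘ ∂_n = 0` for all
`n ≥ 1`; in particular `SW` vanishes on boundaries, i.e. it is a chain map from the bar
complex of `A` to the Koszul complex of the abelian Lie algebra `ℚ ⊗_ℤ A` (whose
differential is zero). -/
theorem stmt13 (A : Type*) [AddCommGroup A] :
    (∀ g : Fin 0 → A, SW A 0 (FreeAbelianGroup.of g) = 1) ∧
    (∀ (n : ℕ) (x : barChains A (n + 1)), SW A n (barDiff A n x) = 0) ∧
    (∀ (n : ℕ) (b : barChains A n), b ∈ (barDiff A n).range → SW A n b = 0) := by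
  refine ⟨fun g => by simp [SW], SW_barDiff A, ?_⟩
  rintro n b ⟨x, rfl⟩
  exact SW_barDiff A n x
end
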